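/- Theorem 1 (certified robust accuracy): Let f^{w_1},…,f^{w_N} be K-layer feedforward networks of a common architecture with C = n_K output classes and monotone nondecreasing activation h, let ε ≥ 0, and let (x_1*, y_1*),…,(x_m*, y_m*) be test points with associated class labels. Define the robust accuracy ℛ_ε := (1/m) ∑_{i=1}^m 𝟙[ for every x̄ with ‖x_i* − x̄‖_∞ ≤ ε and every class c ≠ y_i*, Ê^N(x̄)_{y_i*} > Ê^N(x̄)_c ], and the IBP certified accuracy ℛ_ε^{IBP} := (1/m) ∑_{i=1}^m 𝟙[ Ê^{N,ε}_{y_i*,LB}(x_i*) > Ê^{N,ε}_{c,UB}(x_i*) for every class c ≠ y_i* ]. Then ℛ_ε ≥ ℛ_ε^{IBP}. -/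

import Mathlib

/-- Activations of a feedforward network: `netPhi … x 0 = x` (the input `φ_(0)`) and
`netPhi … x (k+1) = h (W_k (netPhi … x k) + b_k)` (the activation `φ_(k+1)`).
For a `K`-layer network only the values with `k ≤ K - 1` are used. -/
noncomputable def netPhi (n : ℕ → ℕ)
    (W : ∀ k : ℕ, Matrix (Fin (n (k + 1))) (Fin (n k)) ℝ)
    (b : ∀ k : ℕ, Fin (n (k + 1)) → ℝ) (h : ℝ → ℝ)
    (x : Fin (n 0) → ℝ) : (k : ℕ) → Fin (n k) → ℝ
  | 0 => x
  | (k + 1) => fun i => h (((W k).mulVec (netPhi n W b h x k) + b k) i)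

/-- Pre-activations: `netPre … x k = W_k φ_(k) + b_k`, i.e. the pre-activation
`f_(k+1)` of the network.  The output of a `K`-layer network is `f^w(x) = netPre … x (K-1)`. -/
noncomputable def netPre (n : ℕ → ℕ)
    (W : ∀ k : ℕ, Matrix (Fin (n (k + 1))) (Fin (n k)) ℝ)
    (b : ∀ k : ℕ, Fin (n (k + 1)) → ℝ) (h : ℝ → ℝ)
    (x : Fin (n 0) → ℝ) (k : ℕ) : Fin (n (k + 1)) → ℝ :=
  (W k).mulVec (netPhi n W b h x k) + b k

/-- Interval bound propagation on the activations: `ibpPhi … x ε k = (φ_(k)^L, φ_(k)^U)`.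
At `k = 0` the bounds are `x ∓ ε·𝟙`; at `k+1` they are `h (μ_{k+1} ∓ r_{k+1})` with
`μ_{k+1} = W_k (φ_(k)^U + φ_(k)^L)/2 + b_k` and `r_{k+1} = |W_k| (φ_(k)^U − φ_(k)^L)/2`. -/
noncomputable def ibpPhi (n : ℕ → ℕ)
    (W : ∀ k : ℕ, Matrix (Fin (n (k + 1))) (Fin (n k)) ℝ)
    (b : ∀ k : ℕ, Fin (n (k + 1)) → ℝ) (h : ℝ → ℝ)
    (x : Fin (n 0) → ℝ) (ε : ℝ) : (k : ℕ) → (Fin (n k) → ℝ) × (Fin (n k) → ℝ)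
  | 0 => (fun i => x i - ε, fun i => x i + ε)
  | (k + 1) =>
      let L := (ibpPhi n W b h x ε k).1
      let U := (ibpPhi n W b h x ε k).2
      let μ := (W k).mulVec (fun i => (U i + L i) / 2) + b k
      let r := (Matrix.of fun i j => |W k i j|).mulVec (fun i => (U i - L i) / 2)
      (fun i => h (μ i - r i), fun i => h (μ i + r i))

/-- Interval bound propagation on the pre-activations:
`ibpPre … x ε k = (f_(k+1)^L, f_(k+1)^U) = (μ_{k+1} − r_{k+1}, μ_{k+1} + r_{k+1})`.
The IBP output bounds of a `K`-layer network are `(f^{w,L,ε}, f^{w,U,ε}) = ibpPre … x ε (K-1)`. -/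
noncomputable def ibpPre (n : ℕ → ℕ)
    (W : ∀ k : ℕ, Matrix (Fin (n (k + 1))) (Fin (n k)) ℝ)
    (b : ∀ k : ℕ, Fin (n (k + 1)) → ℝ) (h : ℝ → ℝ)
    (x : Fin (n 0) → ℝ) (ε : ℝ) (k : ℕ) : (Fin (n (k + 1)) → ℝ) × (Fin (n (k + 1)) → ℝ) :=
  let L := (ibpPhi n W b h x ε k).1
  let U := (ibpPhi n W b h x ε k).2
  let μ := (W k).mulVec (fun i => (U i + L i) / 2) + b k
  let r := (Matrix.of fun i j => |W k i j|).mulVec (fun i => (U i - L i) / 2)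
  (fun i => μ i - r i, fun i => μ i + r i)

/-- Softmax probability of class `y` for logits `z ∈ ℝ^C`. -/
noncomputable def softmax {C : ℕ} (y : Fin C) (z : Fin C → ℝ) : ℝ :=
  Real.exp (z y) / ∑ j, Real.exp (z j)

/-- The corner vector `f_LB` with `(f_LB) y = L y` and `(f_LB) j = U j` for `j ≠ y`. -/
def cornerLB {C : ℕ} (y : Fin C) (L U : Fin C → ℝ) : Fin C → ℝ :=
  fun j => if j = y then L j else U j

/-- The corner vector `f_UB` with `(f_UB) c' = U c'` and `(f_UB) j = L j` for `j ≠ c'`. -/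
def cornerUB {C : ℕ} (c' : Fin C) (L U : Fin C → ℝ) : Fin C → ℝ :=
  fun j => if j = c' then U j else L j

/-- Empirical posterior predictor of `N` networks `f^{w_1},…,f^{w_N}` of the common
`K`-layer architecture given by `(n, Ws i, bs i, h)`:
`Ê^N(x) c = (1/N) ∑ i σ_c(f^{w_i}(x))`. -/
noncomputable def ensemblePred (n : ℕ → ℕ) (N K : ℕ)
    (Ws : Fin N → ∀ k : ℕ, Matrix (Fin (n (k + 1))) (Fin (n k)) ℝ)
    (bs : Fin N → ∀ k : ℕ, Fin (n (k + 1)) → ℝ) (h : ℝ → ℝ)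
    (x : Fin (n 0) → ℝ) (c : Fin (n (K - 1 + 1))) : ℝ :=
  (1 / (N : ℝ)) * ∑ i : Fin N, softmax c (netPre n (Ws i) (bs i) h x (K - 1))

/-- IBP lower bound on the empirical predictor for class `y` at `x` and radius `ε`:
`Ê^{N,ε}_{y,LB} = (1/N) ∑ i σ_y(f_LB^{w_i,ε}(x))`. -/
noncomputable def ensembleLB (n : ℕ → ℕ) (N K : ℕ)
    (Ws : Fin N → ∀ k : ℕ, Matrix (Fin (n (k + 1))) (Fin (n k)) ℝ)
    (bs : Fin N → ∀ k : ℕ, Fin (n (k + 1)) → ℝ) (h : ℝ → ℝ)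
    (x : Fin (n 0) → ℝ) (y : Fin (n (K - 1 + 1))) (ε : ℝ) : ℝ :=
  (1 / (N : ℝ)) * ∑ i : Fin N,
    softmax y (cornerLB y (ibpPre n (Ws i) (bs i) h x ε (K - 1)).1
      (ibpPre n (Ws i) (bs i) h x ε (K - 1)).2)

/-- IBP upper bound on the empirical predictor for class `c'` at `x` and radius `ε`:
`Ê^{N,ε}_{c',UB} = (1/N) ∑ i σ_{c'}(f_UB^{w_i,ε,c'}(x))`. -/
noncomputable def ensembleUB (n : ℕ → ℕ) (N K : ℕ)
    (Ws : Fin N → ∀ k : ℕ, Matrix (Fin (n (k + 1))) (Fin (n k)) ℝ)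
    (bs : Fin N → ∀ k : ℕ, Fin (n (k + 1)) → ℝ) (h : ℝ → ℝ)
    (x : Fin (n 0) → ℝ) (c' : Fin (n (K - 1 + 1))) (ε : ℝ) : ℝ :=
  (1 / (N : ℝ)) * ∑ i : Fin N,
    softmax c' (cornerUB c' (ibpPre n (Ws i) (bs i) h x ε (K - 1)).1
      (ibpPre n (Ws i) (bs i) h x ε (K - 1)).2)

theorem affine_bound {p q : ℕ} (W : Matrix (Fin p) (Fin q) ℝ) (b : Fin p → ℝ)
    (L U v : Fin q → ℝ) (hL : ∀ i, L i ≤ v i) (hU : ∀ i, v i ≤ U i) (i : Fin p) :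
    |(W.mulVec v + b) i - (W.mulVec (fun i => (U i + L i) / 2) + b) i| ≤
      (Matrix.of fun i j => |W i j|).mulVec (fun i => (U i - L i) / 2) i := by
  simp only [Pi.add_apply, Matrix.mulVec, dotProduct, Matrix.of_apply, add_sub_add_right_eq_sub]
  rw [← Finset.sum_sub_distrib]
  refine (Finset.abs_sum_le_sum_abs _ _).trans (Finset.sum_le_sum fun j _ => ?_)
  rw [← mul_sub, abs_mul]
  refine mul_le_mul_of_nonneg_left ?_ (abs_nonneg _)
  rw [abs_le]
  constructor <;> linarith [hL j, hU j]

theorem phi_bound (n : ℕ → ℕ)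
    (W : ∀ k : ℕ, Matrix (Fin (n (k + 1))) (Fin (n k)) ℝ)
    (b : ∀ k : ℕ, Fin (n (k + 1)) → ℝ) (h : ℝ → ℝ) (hmono : Monotone h)
    (x xbar : Fin (n 0) → ℝ) (ε : ℝ) (hx : ‖x - xbar‖ ≤ ε) (k : ℕ) :
    (∀ i, (ibpPhi n W b h x ε k).1 i ≤ netPhi n W b h xbar k i) ∧
      (∀ i, netPhi n W b h xbar k i ≤ (ibpPhi n W b h x ε k).2 i) := by
  induction k with
  | zero =>
    have key : ∀ i, |x i - xbar i| ≤ ε := fun i => (norm_le_pi_norm (x - xbar) i).trans hx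
    simp only [ibpPhi, netPhi]
    constructor <;> intro i <;> linarith [abs_le.1 (key i)]
  | succ k ih =>
    have key := affine_bound (W k) (b k) _ _ _ ih.1 ih.2
    simp only [ibpPhi, netPhi]
    constructor <;> intro i <;> apply hmono <;> linarith [abs_le.1 (key i)]

theorem pre_bound (n : ℕ → ℕ)
    (W : ∀ k : ℕ, Matrix (Fin (n (k + 1))) (Fin (n k)) ℝ)
    (b : ∀ k : ℕ, Fin (n (k + 1)) → ℝ) (h : ℝ → ℝ) (hmono : Monotone h)
    (x xbar : Fin (n 0) → ℝ) (ε : ℝ) (hx : ‖x - xbar‖ ≤ ε) (k : ℕ) :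
    (∀ i, (ibpPre n W b h x ε k).1 i ≤ netPre n W b h xbar k i) ∧
      (∀ i, netPre n W b h xbar k i ≤ (ibpPre n W b h x ε k).2 i) := by
  have ih := phi_bound n W b h hmono x xbar ε hx k
  have key := affine_bound (W k) (b k) _ _ _ ih.1 ih.2
  simp only [ibpPre, netPre]
  constructor <;> intro i <;> linarith [abs_le.1 (key i)]

theorem softmax_le {C : ℕ} (y : Fin C) (z z' : Fin C → ℝ) (hy : z y ≤ z' y)
    (hj : ∀ j, j ≠ y → z' j ≤ z j) : softmax y z ≤ softmax y z' := by
  have pos : ∀ u : Fin C → ℝ, 0 < ∑ j, Real.exp (u j) := fun u =>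
    Finset.sum_pos (fun j _ => Real.exp_pos _) ⟨y, Finset.mem_univ y⟩
  unfold softmax
  rw [div_le_div_iff₀ (pos z) (pos z'), Finset.mul_sum, Finset.mul_sum]
  refine Finset.sum_le_sum fun j _ => ?_
  rw [← Real.exp_add, ← Real.exp_add, Real.exp_le_exp]
  by_cases hjy : j = y
  · subst hjy; linarith
  · linarith [hj j hjy]

/-- Theorem 1, certified robust accuracy: for test points
`(x_1*, y_1*),…,(x_m*, y_m*)` the robust accuracy
`ℛ_ε = (1/m) ∑ i 𝟙[∀ x̄ ∈ B_∞(x_i*,ε), ∀ c ≠ y_i*, Ê^N(x̄)_{y_i*} > Ê^N(x̄)_c]`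
is lower bounded by the IBP certified accuracy
`ℛ_ε^{IBP} = (1/m) ∑ i 𝟙[∀ c ≠ y_i*, Ê^{N,ε}_{y_i*,LB}(x_i*) > Ê^{N,ε}_{c,UB}(x_i*)]`. -/
theorem certified_robust_accuracy (n : ℕ → ℕ) (N K : ℕ) (hK : 1 ≤ K)
    (Ws : Fin N → ∀ k : ℕ, Matrix (Fin (n (k + 1))) (Fin (n k)) ℝ)
    (bs : Fin N → ∀ k : ℕ, Fin (n (k + 1)) → ℝ) (h : ℝ → ℝ) (hmono : Monotone h)
    (ε : ℝ) (hε : 0 ≤ ε) (m : ℕ)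
    (xs : Fin m → Fin (n 0) → ℝ) (ys : Fin m → Fin (n (K - 1 + 1))) :
    (1 / (m : ℝ)) * ∑ i : Fin m,
        Set.indicator {j : Fin m | ∀ c : Fin (n (K - 1 + 1)), c ≠ ys j →
            ensembleUB n N K Ws bs h (xs j) c ε <
              ensembleLB n N K Ws bs h (xs j) (ys j) ε}
          (fun _ => (1 : ℝ)) i ≤
      (1 / (m : ℝ)) * ∑ i : Fin m,
        Set.indicator {j : Fin m | ∀ xbar : Fin (n 0) → ℝ, ‖xs j - xbar‖ ≤ ε →
            ∀ c : Fin (n (K - 1 + 1)), c ≠ ys j →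
              ensemblePred n N K Ws bs h xbar c <
                ensemblePred n N K Ws bs h xbar (ys j)}
          (fun _ => (1 : ℝ)) i := by
  refine mul_le_mul_of_nonneg_left (Finset.sum_le_sum fun i _ => ?_) (by positivity)
  refine Set.indicator_le_indicator_of_subset ?_ (fun _ => zero_le_one) i
  intro j hj xbar hx c hc
  have pb := fun i => pre_bound n (Ws i) (bs i) h hmono (xs j) xbar ε hx (K - 1)
  refine lt_of_le_of_lt ?_ (lt_of_lt_of_le (hj c hc) ?_)
  · unfold ensemblePred ensembleUB
    refine mul_le_mul_of_nonneg_left (Finset.sum_le_sum fun i _ => ?_) (by positivity)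
    apply softmax_le
    · simpa [cornerUB] using (pb i).2 c
    · intro a ha
      simpa [cornerUB, ha] using (pb i).1 a
  · unfold ensemblePred ensembleLB
    refine mul_le_mul_of_nonneg_left (Finset.sum_le_sum fun i _ => ?_) (by positivity)
    apply softmax_le
    · simpa [cornerLB] using (pb i).1 (ys j)
    · intro a ha
      simpa [cornerLB, ha] using (pb i).2 a
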